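/- For every M ≥ 1, the graph Γ(M) has finitely many connected components; moreover, every connected component of Γ(M) contains a vertex belonging to the finite set {(t_1,…,t_l) ∈ ℤ^l(s) : t_{i+1} − t_i ≤ M − 1 for all 0 ≤ i ≤ l−1}, where one puts t_0 := n + t_l. -/

import Mathlib

/-!
The maps `σ̇_i` are the reflections `v ↦ v - g_i(v) • α_i` in the walls `g_i = 0` of an alcove,
where `g_i(v) = v_{i+1} - v_i`, read cyclically with `v_0 = n + v_l`, and `α_i` is the linear part
of `g_i`. Up to translation, the point with entries `-n j / l` is the barycentre of the alcove
`g_i ≤ 0`. If `v` is outside the small set then `g_i(v) ≥ M > 0` for some `i`, so `σ̇_i.v → v` is an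
arrow of `Γ(M)` and `σ̇_i.v` is strictly closer to the barycentre than `v`; this descent has to end
in the small set. The small set is finite because the `g_i` sum to the constant `-n`, so that upper
bounds on all of them also bound them below, and because the `g_i` and the sum of the entries
determine `v`.
-/

/-- The bijection `σ̇_i` of `ℤ^l(s)` (entries 0-indexed): `σ̇_0` sends `(s_1,…,s_l)` to
`(s_l + n, s_2, …, s_{l−1}, s_1 − n)`, and for `1 ≤ i ≤ l−1`, `σ̇_i` swaps the `i`-th
and `(i+1)`-th entries. -/
def sigmaMove (d : ℕ) (c : ℤ) (i : Fin d) (v : Fin d → ℤ) : Fin d → ℤ := fun j =>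
  if i.val = 0 then
    (if j.val = 0 then v ⟨d - 1, by have := j.isLt; omega⟩ + c
     else if j.val = d - 1 then v ⟨0, by have := j.isLt; omega⟩ - c
     else v j)
  else
    (if j.val + 1 = i.val then v i
     else if j.val = i.val then v ⟨i.val - 1, by have := i.isLt; omega⟩
     else v j)

/-- Membership in the orbit `Ẇ_l·r` of `r` under the group generated by the
involutions `σ̇_0, …, σ̇_{l−1}`. -/
def inOrbit (n l : ℕ) (r v : Fin l → ℤ) : Prop :=
  Relation.EqvGen (fun x y => ∃ i : Fin l, y = sigmaMove l (n : ℤ) i x) r v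

/-- The arrows of the graph `Γ(M)`: `s_l → t_l` whenever `t_l = σ̇_i.s_l` and
`s_i − s_{i+1} ≥ M` (with `s_0 := n + s_l` when `i = 0`). -/
def gammaStep (n l : ℕ) (M : ℤ) (x y : Fin l → ℤ) : Prop :=
  ∃ i : Fin l, y = sigmaMove l (n : ℤ) i x ∧
    (if i.val = 0 then
       (n : ℤ) + x ⟨l - 1, by have := i.isLt; omega⟩ - x ⟨0, by have := i.isLt; omega⟩ ≥ M
     else x ⟨i.val - 1, by have := i.isLt; omega⟩ - x i ≥ M)

/-- The set `{(t_1,…,t_l) ∈ ℤ^l(s) : t_{i+1} − t_i ≤ M − 1 for all 0 ≤ i ≤ l−1}`,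
where `t_0 := n + t_l`. -/
def smallSet (n l : ℕ) (s : ℤ) (M : ℤ) : Set (Fin l → ℤ) :=
  {t | (∑ i, t i = s) ∧
       (∀ h : 0 < l, t ⟨0, h⟩ - ((n : ℤ) + t ⟨l - 1, by omega⟩) ≤ M - 1) ∧
       (∀ (k : ℕ) (h : k + 1 < l), t ⟨k + 1, h⟩ - t ⟨k, by omega⟩ ≤ M - 1)}

theorem finite_setOf_le_and_sum_eq {ι α : Type*} [Fintype ι] [AddCommGroup α] [PartialOrder α]
    [IsOrderedAddMonoid α] [LocallyFiniteOrder α] (b : ι → α) (a : α) :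
    {g : ι → α | g ≤ b ∧ ∑ i, g i = a}.Finite := by
  classical
  refine (Set.finite_Icc (fun i => a - ∑ j ∈ Finset.univ.erase i, b j) b).subset ?_
  rintro g ⟨hle, hsum⟩
  refine ⟨fun i => ?_, hle⟩
  rw [← hsum, ← Finset.add_sum_erase _ _ (Finset.mem_univ i), sub_le_iff_le_add]
  gcongr
  exact hle _

section CyclicGap

variable {l : ℕ} [NeZero l]

/-- The affine simple root attached to `σ̇_i`, vanishing on the fixed points of `σ̇_i`: the
difference `s_{i+1} - s_i`, where `s_0` is the last entry plus `c`. Entries of `v` are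
0-indexed, so that `s_{i+1}` is `v i`. -/
def cyclicGap (c : ℤ) (i : Fin l) (v : Fin l → ℤ) : ℤ :=
  v i - v (i - 1) - if i = 0 then c else 0

theorem fin_zero_sub_one : (0 : Fin l) - 1 = ⟨l - 1, Nat.sub_one_lt (NeZero.ne l)⟩ := by
  obtain ⟨m, rfl⟩ := Nat.exists_eq_succ_of_ne_zero (NeZero.ne l)
  rw [zero_sub]
  exact Fin.ext Fin.coe_neg_one

theorem fin_mk_add_one_sub_one {k : ℕ} (hk : k + 1 < l) :
    (⟨k + 1, hk⟩ : Fin l) - 1 = ⟨k, Nat.lt_of_succ_lt hk⟩ :=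
  Fin.ext (Fin.val_sub_one_of_ne_zero (Fin.ne_of_val_ne k.succ_ne_zero))

theorem forall_fin_iff_zero_and_succ {p : Fin l → Prop} :
    (∀ i, p i) ↔ p 0 ∧ ∀ (k : ℕ) (hk : k + 1 < l), p ⟨k + 1, hk⟩ := by
  refine ⟨fun h => ⟨h 0, fun k hk => h _⟩, fun ⟨hzero, hsucc⟩ => ?_⟩
  rintro ⟨_ | k, hk⟩
  exacts [hzero, hsucc k hk]

theorem cyclicGap_zero (c : ℤ) (v : Fin l → ℤ) :
    cyclicGap c 0 v = v 0 - v ⟨l - 1, Nat.sub_one_lt (NeZero.ne l)⟩ - c := by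
  rw [cyclicGap, fin_zero_sub_one, if_pos rfl]

theorem cyclicGap_succ (c : ℤ) {k : ℕ} (hk : k + 1 < l) (v : Fin l → ℤ) :
    cyclicGap c ⟨k + 1, hk⟩ v = v ⟨k + 1, hk⟩ - v ⟨k, Nat.lt_of_succ_lt hk⟩ := by
  rw [cyclicGap, fin_mk_add_one_sub_one, if_neg (Fin.ne_of_val_ne k.succ_ne_zero), sub_zero]

theorem mem_smallSet_iff {n : ℕ} {s M : ℤ} {t : Fin l → ℤ} :
    t ∈ smallSet n l s M ↔ ∑ i, t i = s ∧ ∀ i, cyclicGap n i t ≤ M - 1 := by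
  simp only [smallSet, Set.mem_ofPred_eq, forall_fin_iff_zero_and_succ, cyclicGap_zero,
    cyclicGap_succ, forall_prop_of_true (NeZero.pos l), sub_add_eq_sub_sub_swap, Fin.mk_zero']

theorem gammaStep_iff {n : ℕ} {M : ℤ} {x y : Fin l → ℤ} :
    gammaStep n l M x y ↔ ∃ i, y = sigmaMove l n i x ∧ cyclicGap n i x ≤ -M := by
  refine exists_congr fun ⟨i, hi⟩ => and_congr_right fun _ => ?_
  rcases i with _ | k
  · rw [Fin.mk_zero', cyclicGap_zero]
    simp only [Fin.val_zero, ↓reduceIte]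
    lia
  · rw [cyclicGap_succ]
    simp only [Nat.add_one_ne_zero, ↓reduceIte, Nat.add_one_sub_one]
    lia

theorem sum_cyclicGap (c : ℤ) (v : Fin l → ℤ) : ∑ i, cyclicGap c i v = -c := by
  have hshift : ∑ i, v (i - 1) = ∑ i, v i := (Equiv.subRight 1).sum_comp v
  simp [cyclicGap, Finset.sum_sub_distrib, hshift]

theorem apply_eq_apply_zero_of_sub_one {α : Type*} {f : Fin l → α} (hf : ∀ i, f (i - 1) = f i)
    (i : Fin l) : f i = f 0 := by
  obtain ⟨k, hk⟩ := i
  induction k with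
  | zero => rfl
  | succ k ih => rw [← hf, fin_mk_add_one_sub_one, ih]

theorem injOn_cyclicGap (c s : ℤ) :
    {v : Fin l → ℤ | ∑ i, v i = s}.InjOn (fun v i => cyclicGap c i v) := by
  intro v hv w hw hgap
  have hshift (i : Fin l) : v (i - 1) - w (i - 1) = v i - w i := by
    have := congrFun hgap i
    simp only [cyclicGap] at this
    linarith
  have hconst (i : Fin l) : v i - w i = v 0 - w 0 :=
    apply_eq_apply_zero_of_sub_one (f := fun i => v i - w i) hshift i
  have hsum : l * (v 0 - w 0) = 0 := by
    calc
      l * (v 0 - w 0) = ∑ i, (v i - w i) := by simp only [hconst, Fin.sum_const, nsmul_eq_mul]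
      _ = 0 := by rw [Finset.sum_sub_distrib, hv, hw, sub_self]
  have hzero : v 0 - w 0 = 0 := by simpa [NeZero.ne l] using hsum
  exact funext fun i => sub_eq_zero.mp ((hconst i).trans hzero)

theorem smallSet_finite (n : ℕ) (s M : ℤ) : (smallSet n l s M).Finite := by
  refine Set.Finite.of_injOn (fun t ht => ?_)
    ((injOn_cyclicGap n s).mono fun t ht => (mem_smallSet_iff.mp ht).1)
    (finite_setOf_le_and_sum_eq (fun _ => M - 1) (-n : ℤ))
  exact ⟨(mem_smallSet_iff.mp ht).2, sum_cyclicGap n t⟩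

/-- The linear part of `cyclicGap c i`, as the vector representing it for the dot product. -/
def cyclicRoot (i : Fin l) : Fin l → ℤ :=
  Pi.single i 1 - Pi.single (i - 1) 1

theorem sum_cyclicRoot (i : Fin l) : ∑ j, cyclicRoot i j = 0 := by
  simp [cyclicRoot, Finset.sum_sub_distrib]

theorem cyclicRoot_dotProduct (i : Fin l) (v : Fin l → ℤ) :
    cyclicRoot i ⬝ᵥ v = v i - v (i - 1) := by
  simp [cyclicRoot, sub_dotProduct]

end CyclicGap

section Reflection

variable {l : ℕ} [l.AtLeastTwo]

theorem fin_sub_one_ne_self (i : Fin l) : i - 1 ≠ i := by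
  rw [ne_eq, sub_eq_self, Fin.one_eq_zero_iff]
  exact Nat.AtLeastTwo.ne_one

theorem cyclicRoot_dotProduct_self (i : Fin l) : cyclicRoot i ⬝ᵥ cyclicRoot i = 2 := by
  rw [cyclicRoot_dotProduct]
  simp [cyclicRoot, (fin_sub_one_ne_self i).symm]

theorem sigmaMove_eq_sub_smul (c : ℤ) (i : Fin l) (v : Fin l → ℤ) :
    sigmaMove l c i v = v - cyclicGap c i v • cyclicRoot i := by
  have hl : 2 ≤ l := Nat.AtLeastTwo.prop
  obtain ⟨i, hi⟩ := i
  funext ⟨j, hj⟩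
  rcases i with _ | k
  · rw [Fin.mk_zero', cyclicGap_zero]
    simp only [sigmaMove, cyclicRoot, fin_zero_sub_one, Pi.sub_apply, Pi.smul_apply,
      Pi.single_apply, smul_eq_mul, Fin.ext_iff, Fin.val_zero, ↓reduceIte]
    grind
  · rw [cyclicGap_succ]
    simp only [sigmaMove, cyclicRoot, fin_mk_add_one_sub_one, Pi.sub_apply, Pi.smul_apply,
      Pi.single_apply, smul_eq_mul, Fin.ext_iff]
    grind

theorem cyclicGap_sub_smul_cyclicRoot (c a : ℤ) (i : Fin l) (v : Fin l → ℤ) :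
    cyclicGap c i (v - a • cyclicRoot i) = cyclicGap c i v - 2 * a := by
  have := cyclicRoot_dotProduct_self i
  rw [cyclicRoot_dotProduct] at this
  simp only [cyclicGap, Pi.sub_apply, Pi.smul_apply, smul_eq_mul]
  linear_combination -a * this

theorem cyclicGap_sigmaMove (c : ℤ) (i : Fin l) (v : Fin l → ℤ) :
    cyclicGap c i (sigmaMove l c i v) = -cyclicGap c i v := by
  rw [sigmaMove_eq_sub_smul, cyclicGap_sub_smul_cyclicRoot]
  ring

theorem sigmaMove_sigmaMove (c : ℤ) (i : Fin l) (v : Fin l → ℤ) :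
    sigmaMove l c i (sigmaMove l c i v) = v := by
  rw [sigmaMove_eq_sub_smul, cyclicGap_sigmaMove, sigmaMove_eq_sub_smul, neg_smul, sub_neg_eq_add,
    sub_add_cancel]

theorem sum_sigmaMove (c : ℤ) (i : Fin l) (v : Fin l → ℤ) :
    ∑ j, sigmaMove l c i v j = ∑ j, v j := by
  simp [sigmaMove_eq_sub_smul, Finset.sum_sub_distrib, ← Finset.mul_sum, sum_cyclicRoot]

theorem sum_eq_of_inOrbit {n : ℕ} {r v : Fin l → ℤ} (h : inOrbit n l r v) :
    ∑ j, v j = ∑ j, r j := by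
  induction h with
  | rel x y hxy => obtain ⟨i, rfl⟩ := hxy; exact sum_sigmaMove n i x
  | refl x => rfl
  | symm x y _ ih => exact ih.symm
  | trans x y z _ _ ihxy ihyz => exact ihyz.trans ihxy

end Reflection

section Descent

theorem inOrbit_of_eqvGen_gammaStep {n l : ℕ} {M : ℤ} {v t : Fin l → ℤ}
    (h : Relation.EqvGen (gammaStep n l M) v t) : inOrbit n l v t :=
  Relation.EqvGen.mono (fun _ _ ⟨i, hi, _⟩ => ⟨i, hi⟩) _ _ h

/-- `l` times the displacement of `v` from the point with entries `-c j / l`, the barycentre of the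
alcove bounded by the walls of the reflections `σ̇_i`, up to translation. -/
def scaledOffset {l : ℕ} (c : ℤ) (v : Fin l → ℤ) : Fin l → ℤ :=
  fun j => l * v j + c * j

/-- `l ^ 2` times the squared distance from `v` to the centre of the alcove, which decreases along
the descent to the small set. -/
def potential {l : ℕ} (c : ℤ) (v : Fin l → ℤ) : ℤ :=
  scaledOffset c v ⬝ᵥ scaledOffset c v

theorem potential_nonneg {l : ℕ} (c : ℤ) (v : Fin l → ℤ) : 0 ≤ potential c v := by
  rw [potential, dotProduct]
  exact Finset.sum_nonneg fun j _ => mul_self_nonneg (scaledOffset c v j)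

-- The constant term does not depend on `i`: the centre is equidistant from all the walls.
theorem cyclicRoot_dotProduct_scaledOffset {l : ℕ} [NeZero l] (c : ℤ) (i : Fin l)
    (v : Fin l → ℤ) : cyclicRoot i ⬝ᵥ scaledOffset c v = l * cyclicGap c i v + c := by
  rw [cyclicRoot_dotProduct]
  obtain ⟨_ | k, hi⟩ := i
  · have hl : ((l - 1 : ℕ) : ℤ) = l - 1 := by have := NeZero.pos l; omega
    rw [Fin.mk_zero', cyclicGap_zero, fin_zero_sub_one]
    simp only [scaledOffset, hl, Fin.val_zero]
    ring
  · rw [cyclicGap_succ, fin_mk_add_one_sub_one]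
    simp only [scaledOffset]
    push_cast
    ring

variable {l : ℕ} [l.AtLeastTwo]

theorem potential_sigmaMove (c : ℤ) (i : Fin l) (v : Fin l → ℤ) :
    potential c (sigmaMove l c i v) = potential c v - 2 * c * l * cyclicGap c i v := by
  have hoffset : scaledOffset c (sigmaMove l c i v) =
      scaledOffset c v - (l * cyclicGap c i v) • cyclicRoot i := by
    ext j
    simp only [scaledOffset, sigmaMove_eq_sub_smul, Pi.sub_apply, Pi.smul_apply, smul_eq_mul]
    ring
  simp only [potential, hoffset, sub_dotProduct, dotProduct_sub, smul_dotProduct, dotProduct_smul,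
    dotProduct_comm (scaledOffset c v) (cyclicRoot i), cyclicRoot_dotProduct_scaledOffset,
    cyclicRoot_dotProduct_self, smul_eq_mul]
  ring

theorem potential_sigmaMove_lt {c : ℤ} (hc : 0 < c) {i : Fin l} {v : Fin l → ℤ}
    (hgap : 0 < cyclicGap c i v) : potential c (sigmaMove l c i v) < potential c v := by
  have hl : 0 < l := NeZero.pos l
  rw [potential_sigmaMove]
  exact sub_lt_self _ (by positivity)

theorem gammaStep_sigmaMove {n : ℕ} {M : ℤ} {i : Fin l} {v : Fin l → ℤ}
    (hgap : M ≤ cyclicGap n i v) : gammaStep n l M (sigmaMove l n i v) v :=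
  gammaStep_iff.mpr ⟨i, (sigmaMove_sigmaMove _ i v).symm, by
    rw [cyclicGap_sigmaMove]
    exact neg_le_neg hgap⟩

theorem exists_mem_smallSet_eqvGen_gammaStep {n : ℕ} (hn : 0 < n) {M : ℤ} (hM : 0 < M)
    (v : Fin l → ℤ) :
    ∃ t ∈ smallSet n l (∑ j, v j) M, Relation.EqvGen (gammaStep n l M) v t := by
  induction hm : (potential n v).toNat using Nat.strong_induction_on generalizing v with
  | _ m ih =>
    by_cases hsmall : v ∈ smallSet n l (∑ j, v j) M
    · exact ⟨v, hsmall, .refl v⟩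
    obtain ⟨i, hgap⟩ : ∃ i, M ≤ cyclicGap n i v := by
      simpa [mem_smallSet_iff, Int.le_sub_one_iff] using hsmall
    have hlt : potential n (sigmaMove l n i v) < potential n v :=
      potential_sigmaMove_lt (by exact_mod_cast hn) (hM.trans_le hgap)
    obtain ⟨t, ht, hconn⟩ := ih _ (by have := potential_nonneg n (sigmaMove l n i v); omega)
      (sigmaMove l n i v) rfl
    rw [sum_sigmaMove] at ht
    exact ⟨t, ht, .trans _ _ _ (.symm _ _ (.rel _ _ (gammaStep_sigmaMove hgap))) hconn⟩

end Descent

theorem stmt_5_general (n l : ℕ) (hn : 0 < n) (hl : 2 ≤ l) (s : ℤ) (r : Fin l → ℤ)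
    (hr : ∑ i, r i = s) (M : ℤ) (hM : 0 < M) :
    (smallSet n l s M).Finite ∧
    (∃ F : Finset (Fin l → ℤ), ∀ v, inOrbit n l r v →
      ∃ f ∈ F, inOrbit n l r f ∧ Relation.EqvGen (gammaStep n l M) v f) ∧
    (∀ v, inOrbit n l r v →
      ∃ t, inOrbit n l r t ∧ t ∈ smallSet n l s M ∧ Relation.EqvGen (gammaStep n l M) v t) := by
  have : l.AtLeastTwo := ⟨hl⟩
  have hfin : (smallSet n l s M).Finite := smallSet_finite n s M
  have hconn (v) (hv : inOrbit n l r v) : ∃ t, inOrbit n l r t ∧ t ∈ smallSet n l s M ∧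
      Relation.EqvGen (gammaStep n l M) v t := by
    obtain ⟨t, ht, hvt⟩ := exists_mem_smallSet_eqvGen_gammaStep hn hM v
    rw [sum_eq_of_inOrbit hv, hr] at ht
    exact ⟨t, .trans _ _ _ hv (inOrbit_of_eqvGen_gammaStep hvt), ht, hvt⟩
  refine ⟨hfin, ⟨hfin.toFinset, fun v hv => ?_⟩, hconn⟩
  obtain ⟨t, hrt, ht, hvt⟩ := hconn v hv
  exact ⟨t, hfin.mem_toFinset.mpr ht, hrt, hvt⟩

/-- For every `M ≥ 1` the graph `Γ(M)` has finitely many connected components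
(there is a finite set of vertices meeting every component); moreover every
connected component contains a vertex belonging to the finite set `smallSet`. -/
theorem stmt_5 (n l : ℕ) (hn : 2 ≤ n) (hl : 2 ≤ l) (s : ℤ)
    (r : Fin l → ℤ)
    (hr : (∑ i, r i = s) ∧ (∀ i j : Fin l, i ≤ j → r j ≤ r i) ∧
          r ⟨0, by omega⟩ - r ⟨l - 1, by omega⟩ ≤ (n : ℤ))
    (M : ℕ) (hM : 1 ≤ M) :
    (smallSet n l s (M : ℤ)).Finite ∧
    (∃ F : Finset (Fin l → ℤ), ∀ v, inOrbit n l r v →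
      ∃ f ∈ F, inOrbit n l r f ∧ Relation.EqvGen (gammaStep n l (M : ℤ)) v f) ∧
    (∀ v, inOrbit n l r v →
      ∃ t, inOrbit n l r t ∧ t ∈ smallSet n l s (M : ℤ) ∧
        Relation.EqvGen (gammaStep n l (M : ℤ)) v t) := by
  exact stmt_5_general n l (by lia) hl s r hr.1 M (by lia)
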